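/- Let d ≥ 2 and let f(z) = z^d + a_{d−2}z^{d−2} + ⋯ + a₁z + a₀ ∈ ℂ[z] be a monic centred polynomial. If f is post-critically finite, then every coefficient aᵢ is algebraic over ℚ. -/

import Mathlib

/-!
The elements of `K` integral over `R` are those lying in every valuation ring of `K` above `R`, so
fix such a ring, with valuation `v`; it inherits the invertibility of `d!` from `R`. Orbits escape
as soon as the leading term dominates, so finite orbits of `f` are bounded in terms of its
coefficients. The coefficients are in turn bounded by the critical points: `f'` is `d` times the
product of the `z - c`, and the constant term is controlled by the finiteness of a critical orbit.
It therefore suffices to show `v c ≤ 1` for all critical points `c`.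

Otherwise let `γ` be a critical point of largest valuation, so `1 < v γ`. Then
`g z = f (γ z) / γ ^ d` has integral coefficients and critical points, and its critical values lie
in the maximal ideal because `v (f c) ≤ v γ < v γ ^ d`. So every critical value of the reduction
`h` of `g` vanishes: a root of `h'` of multiplicity `m` is a root of `h` of multiplicity `m + 1`. If
`h'` has `s` distinct roots, then `(d - 1) + s ≤ d`, whence `s = 1` and `h` is the `d`-th power of a
linear polynomial. Being centred, `h = z ^ d`; but `1` is a critical point of `g`, so `h 1 = 0`.
-/

open Polynomial

noncomputable section

namespace PCF

open scoped Nat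

section Orbits

variable {R : Type*} [CommRing R]

/-- The forward orbit of `z` under the polynomial map `f` is finite, i.e. `z` is preperiodic. -/
def HasFiniteOrbit (f : R[X]) (z : R) : Prop :=
  (Set.range fun n : ℕ => (fun w => f.eval w)^[n] z).Finite

/-- Every critical point of `f` in the coefficient ring is preperiodic. This is the usual notion of
post-critical finiteness when `f'` splits; otherwise some critical points may not be seen. -/
def IsPostCriticallyFinite (f : R[X]) : Prop :=
  ∀ c : R, (derivative f).eval c = 0 → HasFiniteOrbit f c

lemma HasFiniteOrbit.eval {f : R[X]} {z : R} (h : HasFiniteOrbit f z) :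
    HasFiniteOrbit f (f.eval z) := by
  refine h.subset ?_
  rintro _ ⟨n, rfl⟩
  exact ⟨n + 1, rfl⟩

variable {Γ : Type*} [LinearOrderedCommGroupWithZero Γ] (v : Valuation R Γ) {f : R[X]} {z : R}

lemma valuation_eval_eq_pow (hmonic : f.Monic) (hz : v z ≠ 0)
    (hcoeff : ∀ j < f.natDegree, v (f.coeff j) < v z ^ (f.natDegree - j)) :
    v (f.eval z) = v z ^ f.natDegree := by
  have hlower : v (∑ j ∈ Finset.range f.natDegree, f.coeff j * z ^ j) < v z ^ f.natDegree := by
    refine v.map_sum_lt (pow_ne_zero _ hz) fun j hj => ?_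
    have hj : j < f.natDegree := Finset.mem_range.1 hj
    calc v (f.coeff j * z ^ j) = v (f.coeff j) * v z ^ j := by rw [map_mul, map_pow]
      _ < v z ^ (f.natDegree - j) * v z ^ j :=
        mul_lt_mul_of_pos_right (hcoeff j hj) (pow_pos (zero_lt_iff.2 hz) j)
      _ = v z ^ f.natDegree := by rw [← pow_add, Nat.sub_add_cancel hj.le]
  rw [eval_eq_sum_range, Finset.sum_range_succ, hmonic.coeff_natDegree, one_mul,
    v.map_add_eq_of_lt_right (by rwa [map_pow]), map_pow]

lemma not_hasFiniteOrbit_of_coeff_lt (hmonic : f.Monic) (hd : 2 ≤ f.natDegree) (hz : 1 < v z)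
    (hcoeff : ∀ j < f.natDegree, v (f.coeff j) < v z ^ (f.natDegree - j)) :
    ¬ HasFiniteOrbit f z := by
  have lt_eval : ∀ w, v z ≤ v w → v w < v (f.eval w) := fun w hw => by
    have hw1 : 1 < v w := hz.trans_le hw
    rw [valuation_eval_eq_pow v hmonic (zero_lt_one.trans hw1).ne' fun j hj =>
      (hcoeff j hj).trans_le (pow_le_pow_left₀ zero_le hw _)]
    exact lt_self_pow₀ hw1 hd
  have le_iterate : ∀ n : ℕ, v z ≤ v ((fun w => f.eval w)^[n] z) := fun n => by
    induction n with
    | zero => rfl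
    | succ n ih =>
      rw [Function.iterate_succ_apply']
      exact ih.trans (lt_eval _ ih).le
  have hmono : StrictMono fun n : ℕ => v ((fun w => f.eval w)^[n] z) :=
    strictMono_nat_of_lt_succ fun n => by
      rw [Function.iterate_succ_apply']
      exact lt_eval _ (le_iterate n)
  exact Set.infinite_range_of_injective (hmono.injective.of_comp (f := v))

variable {ρ : Γ}

lemma HasFiniteOrbit.valuation_le (hz : HasFiniteOrbit f z) (hmonic : f.Monic)
    (hd : 2 ≤ f.natDegree) (hρ : 1 ≤ ρ)
    (hcoeff : ∀ j < f.natDegree, v (f.coeff j) ≤ ρ ^ (f.natDegree - j)) : v z ≤ ρ := by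
  by_contra! hlt
  refine not_hasFiniteOrbit_of_coeff_lt v hmonic hd (hρ.trans_lt hlt) (fun j hj => ?_) hz
  exact (hcoeff j hj).trans_lt (pow_lt_pow_left₀ hlt zero_le (Nat.sub_ne_zero_of_lt hj))

/-- If the constant term were larger, it would dominate `f.eval z`, whose orbit would escape. -/
lemma HasFiniteOrbit.valuation_coeff_zero_le (hz : HasFiniteOrbit f z) (hmonic : f.Monic)
    (hd : 2 ≤ f.natDegree) (hρ : 1 ≤ ρ) (hzρ : v z ≤ ρ)
    (hcoeff : ∀ j ≠ 0, j < f.natDegree → v (f.coeff j) ≤ ρ ^ (f.natDegree - j)) :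
    v (f.coeff 0) ≤ ρ ^ f.natDegree := by
  by_contra! hlt
  have hhigher : v (∑ j ∈ Finset.range f.natDegree, f.coeff (j + 1) * z ^ (j + 1)) ≤
      ρ ^ f.natDegree := by
    refine v.map_sum_le fun j hj => ?_
    have hj : j + 1 ≤ f.natDegree := Finset.mem_range.1 hj
    have hcoeff' : v (f.coeff (j + 1)) ≤ ρ ^ (f.natDegree - (j + 1)) := by
      rcases hj.eq_or_lt with heq | hjd
      · rw [heq, hmonic.coeff_natDegree, map_one, Nat.sub_self, pow_zero]
      · exact hcoeff _ j.succ_ne_zero hjd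
    calc v (f.coeff (j + 1) * z ^ (j + 1)) = v (f.coeff (j + 1)) * v z ^ (j + 1) := by
          rw [map_mul, map_pow]
      _ ≤ ρ ^ (f.natDegree - (j + 1)) * ρ ^ (j + 1) := by gcongr
      _ = ρ ^ f.natDegree := by rw [← pow_add, Nat.sub_add_cancel hj]
  have heval : v (f.eval z) = v (f.coeff 0) := by
    rw [eval_eq_sum_range, Finset.sum_range_succ', pow_zero, mul_one,
      v.map_add_eq_of_lt_right (hhigher.trans_lt hlt)]
  have hρlt : ρ < v (f.eval z) := heval ▸ (le_self_pow₀ hρ (by omega)).trans_lt hlt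
  have hone : 1 < v (f.eval z) := hρ.trans_lt hρlt
  refine not_hasFiniteOrbit_of_coeff_lt v hmonic hd hone (fun j hj => ?_) hz.eval
  rcases eq_or_ne j 0 with rfl | hj0
  · rw [← heval]
    exact lt_self_pow₀ hone hd
  · exact (hcoeff j hj0 hj).trans_lt (pow_lt_pow_left₀ hρlt zero_le (Nat.sub_ne_zero_of_lt hj))

end Orbits

section Derivative

lemma isUnit_natCast_of_isUnit_factorial {R : Type*} [CommSemiring R] {m n : ℕ}
    (h : IsUnit (n ! : R)) (hm : 0 < m) (hmn : m ≤ n) : IsUnit (m : R) :=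
  isUnit_of_dvd_unit (Nat.cast_dvd_cast (Nat.dvd_factorial hm hmn)) h

lemma natCast_ne_zero_of_isUnit_factorial {R S : Type*} [CommSemiring R] [Semiring S] [Nontrivial S]
    (ψ : R →+* S) {n : ℕ} (h : IsUnit (n ! : R)) (hn : 0 < n) : (n : S) ≠ 0 :=
  map_natCast ψ n ▸ ((isUnit_natCast_of_isUnit_factorial h hn le_rfl).map ψ).ne_zero

lemma natDegree_derivative_of_natCast_ne_zero {R : Type*} [Semiring R] [NoZeroDivisors R]
    {p : R[X]} (h : (p.natDegree : R) ≠ 0) : (derivative p).natDegree = p.natDegree - 1 := by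
  have hpos : p.natDegree ≠ 0 := fun h0 => h (by rw [h0, Nat.cast_zero])
  have hp : p.leadingCoeff ≠ 0 := leadingCoeff_ne_zero.2 fun h0 => hpos (by rw [h0, natDegree_zero])
  refine (natDegree_derivative_le p).antisymm (le_natDegree_of_ne_zero ?_)
  rw [coeff_derivative, ← Nat.cast_succ, Nat.succ_eq_add_one, Nat.sub_one_add_one hpos]
  exact mul_ne_zero hp h

lemma leadingCoeff_derivative_of_natCast_ne_zero {R : Type*} [Semiring R] [NoZeroDivisors R]
    {p : R[X]} (h : (p.natDegree : R) ≠ 0) :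
    (derivative p).leadingCoeff = p.leadingCoeff * p.natDegree := by
  have hpos : p.natDegree ≠ 0 := fun h0 => h (by rw [h0, Nat.cast_zero])
  rw [leadingCoeff, natDegree_derivative_of_natCast_ne_zero h, coeff_derivative, ← Nat.cast_succ,
    Nat.succ_eq_add_one, Nat.sub_one_add_one hpos, coeff_natDegree]

lemma derivative_ne_zero_of_natCast_ne_zero {R : Type*} [Semiring R] [NoZeroDivisors R]
    {p : R[X]} (h : (p.natDegree : R) ≠ 0) : derivative p ≠ 0 := by
  have hp : p ≠ 0 := fun h0 => h (by rw [h0, natDegree_zero, Nat.cast_zero])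
  rw [← leadingCoeff_ne_zero, leadingCoeff_derivative_of_natCast_ne_zero h]
  exact mul_ne_zero (leadingCoeff_ne_zero.2 hp) h

lemma derivative_scaleRoots {R : Type*} [CommSemiring R] [NoZeroDivisors R] {p : R[X]}
    (h : (p.natDegree : R) ≠ 0) (s : R) :
    derivative (p.scaleRoots s) = (derivative p).scaleRoots s := by
  ext i
  rw [coeff_derivative, coeff_scaleRoots, coeff_scaleRoots, coeff_derivative,
    natDegree_derivative_of_natCast_ne_zero h, Nat.sub_sub, Nat.add_comm 1 i]
  ring

lemma mem_lifts_of_splits {S K : Type*} [CommRing S] [CommRing K] [IsDomain K] {ψ : S →+* K}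
    {p : K[X]} (hsplit : p.Splits) (hlead : p.leadingCoeff ∈ ψ.range)
    (hroots : ∀ a ∈ p.roots, a ∈ ψ.range) : p ∈ lifts ψ := by
  rw [hsplit.eq_prod_roots, lifts_iff_liftsRing]
  refine mul_mem (C'_mem_lifts hlead) (multiset_prod_mem _ fun q hq => ?_)
  obtain ⟨a, ha, rfl⟩ := Multiset.mem_map.1 hq
  exact sub_mem (X_mem_lifts ψ) (C'_mem_lifts (hroots a ha))

lemma coeff_mem_range_of_derivative_roots_mem_range {S K : Type*} [CommRing S] [CommRing K]
    [IsDomain K] {ψ : S →+* K} {p : K[X]} (hmonic : p.Monic) (hfact : IsUnit (p.natDegree ! : S))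
    (hsplit : (derivative p).Splits) (hroots : ∀ a ∈ (derivative p).roots, a ∈ ψ.range)
    {j : ℕ} (hj : j ≠ 0) : p.coeff j ∈ ψ.range := by
  rcases lt_or_ge p.natDegree j with hlt | hle
  · rw [coeff_eq_zero_of_natDegree_lt hlt]
    exact zero_mem _
  obtain ⟨i, rfl⟩ := Nat.exists_eq_succ_of_ne_zero hj
  have hd0 : (p.natDegree : K) ≠ 0 := natCast_ne_zero_of_isUnit_factorial ψ hfact (by omega)
  have hlead : (derivative p).leadingCoeff ∈ ψ.range := by
    rw [leadingCoeff_derivative_of_natCast_ne_zero hd0, hmonic.leadingCoeff, one_mul]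
    exact natCast_mem _ _
  obtain ⟨a, ha⟩ :=
    (lifts_iff_coeff_lifts _).1 (mem_lifts_of_splits hsplit hlead hroots) i
  obtain ⟨u, hu⟩ := isUnit_natCast_of_isUnit_factorial hfact i.succ_pos hle
  have hu' : ψ u = (i : K) + 1 := by rw [hu, map_natCast, Nat.cast_succ]
  refine ⟨a * ↑u⁻¹, ?_⟩
  calc ψ (a * ↑u⁻¹) = p.coeff (i + 1) * ψ (u * ↑u⁻¹) := by
        rw [map_mul, ha, coeff_derivative, ← hu', mul_assoc, ← map_mul]
    _ = p.coeff (i + 1) := by rw [Units.mul_inv, map_one, mul_one]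

end Derivative

section VanishingCriticalValues

variable {k : Type*} [CommRing k] [IsDomain k] {h : k[X]}

lemma rootMultiplicity_eq_derivative_add_one (hfact : IsUnit (h.natDegree ! : k)) {u : k}
    (hh : h ≠ 0) (hu : h.IsRoot u) :
    h.rootMultiplicity u = (derivative h).rootMultiplicity u + 1 := by
  have hpos : 0 < h.rootMultiplicity u := (rootMultiplicity_pos hh).2 hu
  have hle : h.rootMultiplicity u ≤ h.natDegree := by
    classical exact count_roots h ▸ (Multiset.count_le_card u _).trans (card_roots' h)
  rw [derivative_rootMultiplicity_of_root_of_mem_nonZeroDivisors hu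
    (isUnit_natCast_of_isUnit_factorial hfact hpos hle).mem_nonZeroDivisors]
  omega

lemma exists_eq_X_sub_C_pow_of_roots_derivative (hmonic : h.Monic) (hd : 2 ≤ h.natDegree)
    (hfact : IsUnit (h.natDegree ! : k)) (hsplit : (derivative h).Splits)
    (hroot : ∀ u ∈ (derivative h).roots, h.IsRoot u) :
    ∃ u, h = (X - C u) ^ h.natDegree := by
  classical
  have hd0 : (h.natDegree : k) ≠ 0 := natCast_ne_zero_of_isUnit_factorial (.id k) hfact (by omega)
  have hcard : (derivative h).roots.card = h.natDegree - 1 := by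
    rw [← hsplit.natDegree_eq_card_roots, natDegree_derivative_of_natCast_ne_zero hd0]
  have hcount : ∀ u ∈ (derivative h).roots,
      h.roots.count u = (derivative h).roots.count u + 1 := fun u hu => by
    rw [count_roots, count_roots,
      rootMultiplicity_eq_derivative_add_one hfact hmonic.ne_zero (hroot u hu)]
  have hle : (derivative h).roots + (derivative h).roots.dedup ≤ h.roots := by
    refine Multiset.le_iff_count.2 fun u => ?_
    rw [Multiset.count_add, Multiset.count_dedup]
    split_ifs with hu
    · exact (hcount u hu).ge
    · simp [Multiset.count_eq_zero_of_notMem hu]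
  have hdistinct : (derivative h).roots.toFinset.card ≤ 1 := by
    have := (Multiset.card_le_card hle).trans (card_roots' h)
    rw [Multiset.card_add, hcard] at this
    rw [Multiset.card_toFinset]
    omega
  obtain ⟨u, hu⟩ := Multiset.card_pos_iff_exists_mem.1 (show 0 < (derivative h).roots.card by omega)
  have hrep : (derivative h).roots = Multiset.replicate (h.natDegree - 1) u :=
    Multiset.eq_replicate.2 ⟨hcard, fun w hw => Finset.card_le_one.1 hdistinct w
      (Multiset.mem_toFinset.2 hw) u (Multiset.mem_toFinset.2 hu)⟩
  have hmult : h.rootMultiplicity u = h.natDegree := by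
    rw [← count_roots, hcount u hu, hrep, Multiset.count_replicate_self]
    omega
  exact ⟨u, eq_of_monic_of_dvd_of_natDegree_le ((monic_X_sub_C u).pow _) hmonic
    (hmult ▸ pow_rootMultiplicity_dvd h u) (by simp)⟩

lemma eq_X_pow_of_roots_derivative (hmonic : h.Monic) (hd : 2 ≤ h.natDegree)
    (hfact : IsUnit (h.natDegree ! : k)) (hcent : h.nextCoeff = 0)
    (hsplit : (derivative h).Splits) (hroot : ∀ u ∈ (derivative h).roots, h.IsRoot u) :
    h = X ^ h.natDegree := by
  obtain ⟨u, hu⟩ := exists_eq_X_sub_C_pow_of_roots_derivative hmonic hd hfact hsplit hroot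
  have hd0 : (h.natDegree : k) ≠ 0 := natCast_ne_zero_of_isUnit_factorial (.id k) hfact (by omega)
  have hu0 : u = 0 := by
    rw [hu, (monic_X_sub_C u).nextCoeff_pow, nextCoeff_X_sub_C, nsmul_eq_mul] at hcent
    exact neg_eq_zero.1 ((mul_eq_zero.1 hcent).resolve_left hd0)
  rwa [hu0, C_0, sub_zero] at hu

lemma map_eq_X_pow_of_map_criticalValues_eq_zero {A : Type*} [CommRing A] [IsDomain A]
    (ψ : A →+* k) {p : A[X]} (hmonic : p.Monic) (hd : 2 ≤ p.natDegree)
    (hfact : IsUnit (p.natDegree ! : A)) (hcent : p.nextCoeff = 0)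
    (hsplit : (derivative p).Splits)
    (hcrit : ∀ u, (derivative p).eval u = 0 → ψ (p.eval u) = 0) :
    p.map ψ = X ^ p.natDegree := by
  have hdeg : (p.map ψ).natDegree = p.natDegree := hmonic.natDegree_map ψ
  have hfactk : IsUnit ((p.map ψ).natDegree ! : k) := by
    rw [hdeg, ← map_natCast ψ]
    exact hfact.map ψ
  have hderiv : (derivative p).map ψ ≠ 0 := by
    rw [← derivative_map]
    exact derivative_ne_zero_of_natCast_ne_zero
      (natCast_ne_zero_of_isUnit_factorial (.id k) hfactk (by omega))
  rw [← hdeg]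
  refine eq_X_pow_of_roots_derivative (hmonic.map ψ) (hdeg ▸ hd) hfactk ?_ ?_ fun w hw => ?_
  · rw [nextCoeff_map_of_leadingCoeff_ne_zero ψ (by simp [hmonic.leadingCoeff]), hcent, map_zero]
  · rw [derivative_map]
    exact hsplit.map ψ
  · rw [derivative_map, hsplit.roots_map_of_ne_zero hderiv] at hw
    obtain ⟨u, hu, rfl⟩ := Multiset.mem_map.1 hw
    rw [IsRoot.def, eval_map_apply]
    exact hcrit u (isRoot_of_mem_roots hu)

end VanishingCriticalValues

section Rescaling

lemma exists_root_forall_root_le {R Γ : Type*} [CommRing R] [IsDomain R] [LinearOrder Γ]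
    (w : R → Γ) {p : R[X]} (hp : p ≠ 0) {c : R} (hc : p.eval c = 0) :
    ∃ γ, p.eval γ = 0 ∧ ∀ z, p.eval z = 0 → w z ≤ w γ := by
  classical
  have mem_roots_iff : ∀ z, z ∈ p.roots.toFinset ↔ p.eval z = 0 := fun z => by
    rw [Multiset.mem_toFinset, mem_roots hp, IsRoot.def]
  obtain ⟨γ, hγ, hmax⟩ := p.roots.toFinset.exists_max_image w ⟨c, (mem_roots_iff c).2 hc⟩
  exact ⟨γ, (mem_roots_iff γ).1 hγ, fun z hz => hmax z ((mem_roots_iff z).2 hz)⟩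

lemma nextCoeff_scaleRoots_eq_zero {R : Type*} [CommSemiring R] {p : R[X]} (h : p.nextCoeff = 0)
    (s : R) : (p.scaleRoots s).nextCoeff = 0 := by
  rw [nextCoeff_eq_zero] at h ⊢
  simp only [natDegree_scaleRoots, coeff_scaleRoots]
  exact h.imp_right fun ⟨hpos, h⟩ => ⟨hpos, by rw [h, zero_mul]⟩

variable {K : Type*} [Field K] {γ : K}

lemma eval_scaleRoots_inv (hγ : γ ≠ 0) (p : K[X]) (z : K) :
    (p.scaleRoots γ⁻¹).eval z = γ⁻¹ ^ p.natDegree * p.eval (γ * z) := by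
  rw [← scaleRoots_eval_mul, inv_mul_cancel_left₀ hγ]

lemma eval_scaleRoots_inv_eq_zero_iff (hγ : γ ≠ 0) {p : K[X]} {z : K} :
    (p.scaleRoots γ⁻¹).eval z = 0 ↔ p.eval (γ * z) = 0 := by
  rw [eval_scaleRoots_inv hγ, mul_eq_zero_iff_left (pow_ne_zero _ (inv_ne_zero hγ))]

variable {Γ : Type*} [LinearOrderedCommGroupWithZero Γ] (v : Valuation K Γ)

lemma valuation_coeff_scaleRoots_inv_le_one_iff (hγ : γ ≠ 0) (p : K[X]) (j : ℕ) :
    v ((p.scaleRoots γ⁻¹).coeff j) ≤ 1 ↔ v (p.coeff j) ≤ v γ ^ (p.natDegree - j) := by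
  rw [coeff_scaleRoots, inv_pow, ← div_eq_mul_inv, map_div₀, map_pow,
    div_le_one₀ (pow_pos (v.pos_iff.2 hγ) _)]

lemma valuation_le_one_of_eval_scaleRoots_inv_eq_zero (hγ : γ ≠ 0) {p : K[X]}
    (hroots : ∀ c, p.eval c = 0 → v c ≤ v γ) {z : K} (hz : (p.scaleRoots γ⁻¹).eval z = 0) :
    v z ≤ 1 := by
  have := hroots _ ((eval_scaleRoots_inv_eq_zero_iff hγ).1 hz)
  rwa [map_mul, mul_le_iff_le_one_right (v.pos_iff.2 hγ)] at this

end Rescaling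

section ValuationSubring

variable {K : Type*} [Field K] (A : ValuationSubring K)

lemma mem_range_algebraMap_iff_valuation_le_one {x : K} :
    x ∈ (algebraMap A K).range ↔ A.valuation x ≤ 1 := by
  rw [A.valuation_le_one_iff]
  exact ⟨fun ⟨a, ha⟩ => ha ▸ a.2, fun hx => ⟨⟨x, hx⟩, rfl⟩⟩

variable {f : K[X]}

/-- A polynomial of good reduction reduces to `X ^ d`, so its critical points reduce to `0`. -/
lemma valuation_criticalPoint_lt_one (hmonic : f.Monic) (hd : 2 ≤ f.natDegree)
    (hfact : IsUnit (f.natDegree ! : A)) (hcent : f.nextCoeff = 0)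
    (hsplit : (derivative f).Splits) (hcoeff : ∀ j, A.valuation (f.coeff j) ≤ 1)
    (hcrit : ∀ c, (derivative f).eval c = 0 → A.valuation c ≤ 1)
    (hval : ∀ c, (derivative f).eval c = 0 → A.valuation (f.eval c) < 1)
    {c : K} (hc : (derivative f).eval c = 0) : A.valuation c < 1 := by
  have hinj : Function.Injective (algebraMap A K) := Subtype.val_injective
  obtain ⟨p, rfl, hdeg, hp⟩ := lifts_and_natDegree_eq_and_monic
    ((lifts_iff_coeff_lifts f).2 fun j =>
      (mem_range_algebraMap_iff_valuation_le_one A).2 (hcoeff j)) hmonic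
  have residue_eq_zero_iff : ∀ a : A, IsLocalRing.residue A a = 0 ↔ A.valuation (a : K) < 1 :=
    fun a => (IsLocalRing.residue_eq_zero_iff a).trans (A.valuation_lt_one_iff a)
  have hsplitA : (derivative p).Splits := by
    rw [derivative_map] at hsplit hcrit
    exact hsplit.of_splits_map_of_injective hinj fun a ha =>
      (mem_range_algebraMap_iff_valuation_le_one A).2 (hcrit a (isRoot_of_mem_roots ha))
  have hvalA : ∀ u, (derivative p).eval u = 0 → IsLocalRing.residue A (p.eval u) = 0 := by
    intro u hu
    have := hval (algebraMap A K u) (by rw [derivative_map, eval_map_apply, hu, map_zero])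
    rw [eval_map_apply] at this
    exact (residue_eq_zero_iff _).2 this
  obtain ⟨u, rfl⟩ := (mem_range_algebraMap_iff_valuation_le_one A).2 (hcrit c hc)
  have hu : (derivative p).eval u = 0 :=
    hinj (by rw [← eval_map_apply, ← derivative_map, hc, map_zero])
  have hreduction := map_eq_X_pow_of_map_criticalValues_eq_zero (IsLocalRing.residue A) hp
    (hdeg ▸ hd) (hdeg ▸ hfact) (by rwa [nextCoeff_map hinj, map_eq_zero_iff _ hinj] at hcent)
    hsplitA hvalA
  have hpow : IsLocalRing.residue A u ^ p.natDegree = 0 := by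
    rw [← eval_X_pow (R := IsLocalRing.ResidueField A), ← hreduction, eval_map_apply, hvalA u hu]
  exact (residue_eq_zero_iff u).1 (eq_zero_of_pow_eq_zero hpow)

variable {γ : K}

lemma valuation_coeff_le_of_criticalPoint_le (hmonic : f.Monic) (hd : 0 < f.natDegree)
    (hfact : IsUnit (f.natDegree ! : A)) (hsplit : (derivative f).Splits) (hγ : γ ≠ 0)
    (hcrit : ∀ c, (derivative f).eval c = 0 → A.valuation c ≤ A.valuation γ) {j : ℕ} (hj : j ≠ 0) :
    A.valuation (f.coeff j) ≤ A.valuation γ ^ (f.natDegree - j) := by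
  have hderiv : derivative (f.scaleRoots γ⁻¹) = (derivative f).scaleRoots γ⁻¹ :=
    derivative_scaleRoots (natCast_ne_zero_of_isUnit_factorial (algebraMap A K) hfact hd) _
  rw [← valuation_coeff_scaleRoots_inv_le_one_iff _ hγ,
    ← mem_range_algebraMap_iff_valuation_le_one]
  refine coeff_mem_range_of_derivative_roots_mem_range ((monic_scaleRoots_iff _).2 hmonic)
    (by rwa [natDegree_scaleRoots]) (hderiv ▸ hsplit.scaleRoots _) (fun c hc => ?_) hj
  exact (mem_range_algebraMap_iff_valuation_le_one A).2
    (valuation_le_one_of_eval_scaleRoots_inv_eq_zero _ hγ hcrit (hderiv ▸ isRoot_of_mem_roots hc))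

lemma IsPostCriticallyFinite.valuation_coeff_le (hpcf : IsPostCriticallyFinite f)
    (hmonic : f.Monic) (hd : 2 ≤ f.natDegree) (hfact : IsUnit (f.natDegree ! : A))
    (hsplit : (derivative f).Splits) (hγ : 1 ≤ A.valuation γ)
    (hcrit : ∀ c, (derivative f).eval c = 0 → A.valuation c ≤ A.valuation γ) (j : ℕ) :
    A.valuation (f.coeff j) ≤ A.valuation γ ^ (f.natDegree - j) := by
  have hγ0 : γ ≠ 0 := A.valuation.pos_iff.1 (zero_lt_one.trans_le hγ)
  have hpos : ∀ j ≠ 0, A.valuation (f.coeff j) ≤ A.valuation γ ^ (f.natDegree - j) :=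
    fun j hj => valuation_coeff_le_of_criticalPoint_le A hmonic (by omega) hfact hsplit hγ0 hcrit hj
  rcases eq_or_ne j 0 with rfl | hj
  · obtain ⟨c, hc⟩ := hsplit.exists_eval_eq_zero (degree_ne_of_natDegree_ne (n := 0) (by
      rw [natDegree_derivative_of_natCast_ne_zero
        (natCast_ne_zero_of_isUnit_factorial (algebraMap A K) hfact (by omega))]
      omega))
    exact (hpcf c hc).valuation_coeff_zero_le A.valuation hmonic hd hγ (hcrit c hc)
      fun j hj _ => hpos j hj
  · exact hpos j hj

lemma IsPostCriticallyFinite.valuation_criticalPoint_le_one (hpcf : IsPostCriticallyFinite f)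
    (hmonic : f.Monic) (hd : 2 ≤ f.natDegree) (hfact : IsUnit (f.natDegree ! : A))
    (hcent : f.nextCoeff = 0) (hsplit : (derivative f).Splits)
    {c : K} (hc : (derivative f).eval c = 0) : A.valuation c ≤ 1 := by
  have hd0 : (f.natDegree : K) ≠ 0 :=
    natCast_ne_zero_of_isUnit_factorial (algebraMap A K) hfact (by omega)
  obtain ⟨γ, hγ, hcrit⟩ := exists_root_forall_root_le A.valuation
    (derivative_ne_zero_of_natCast_ne_zero hd0) hc
  by_contra! hc1
  have hγ1 : 1 < A.valuation γ := hc1.trans_le (hcrit c hc)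
  have hγ0 : γ ≠ 0 := A.valuation.pos_iff.1 (zero_lt_one.trans hγ1)
  have hcoeff := hpcf.valuation_coeff_le A hmonic hd hfact hsplit hγ1.le hcrit
  have hderiv : derivative (f.scaleRoots γ⁻¹) = (derivative f).scaleRoots γ⁻¹ :=
    derivative_scaleRoots hd0 _
  have hval : ∀ z, (derivative (f.scaleRoots γ⁻¹)).eval z = 0 →
      A.valuation ((f.scaleRoots γ⁻¹).eval z) < 1 := fun z hz => by
    rw [hderiv, eval_scaleRoots_inv_eq_zero_iff hγ0] at hz
    rw [eval_scaleRoots_inv hγ0, inv_pow, mul_comm, ← div_eq_mul_inv, map_div₀, map_pow,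
      div_lt_one₀ (pow_pos (zero_lt_one.trans hγ1) _)]
    calc A.valuation (f.eval (γ * z)) ≤ A.valuation γ :=
          (hpcf _ hz).eval.valuation_le _ hmonic hd hγ1.le fun j _ => hcoeff j
      _ < A.valuation γ ^ f.natDegree := lt_self_pow₀ hγ1 hd
  have hone : (derivative (f.scaleRoots γ⁻¹)).eval 1 = 0 := by
    rwa [hderiv, eval_scaleRoots_inv_eq_zero_iff hγ0, mul_one]
  refine (valuation_criticalPoint_lt_one A ((monic_scaleRoots_iff _).2 hmonic)
    (by rwa [natDegree_scaleRoots]) (by rwa [natDegree_scaleRoots])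
    (nextCoeff_scaleRoots_eq_zero hcent _) (hderiv ▸ hsplit.scaleRoots _)
    (fun j => (valuation_coeff_scaleRoots_inv_le_one_iff _ hγ0 f j).2 (hcoeff j))
    (fun z hz => valuation_le_one_of_eval_scaleRoots_inv_eq_zero _ hγ0 hcrit (hderiv ▸ hz))
    hval hone).ne (map_one _)

lemma IsPostCriticallyFinite.coeff_mem (hpcf : IsPostCriticallyFinite f)
    (hmonic : f.Monic) (hd : 2 ≤ f.natDegree) (hfact : IsUnit (f.natDegree ! : A))
    (hcent : f.nextCoeff = 0) (hsplit : (derivative f).Splits) (j : ℕ) : f.coeff j ∈ A := by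
  have := hpcf.valuation_coeff_le A (γ := 1) hmonic hd hfact hsplit (map_one _).ge
    (fun c hc => by
      rw [map_one]
      exact hpcf.valuation_criticalPoint_le_one A hmonic hd hfact hcent hsplit hc) j
  rwa [map_one, one_pow, A.valuation_le_one_iff] at this

end ValuationSubring

lemma isIntegral_of_forall_mem_valuationSubring {R K : Type*} [CommRing R] [Field K] [Algebra R K]
    {x : K} (h : ∀ A : ValuationSubring K, (algebraMap R K).range ≤ A.toSubring → x ∈ A) :
    IsIntegral R x := by
  by_contra hx
  have : IsIntegrallyClosedIn (integralClosure R K).toSubring K :=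
    inferInstanceAs (IsIntegrallyClosedIn (integralClosure R K) K)
  obtain ⟨A, hA, hxA⟩ := Subring.exists_le_valuationSubring_of_isIntegrallyClosedIn
    (show x ∉ (integralClosure R K).toSubring from hx)
  refine hxA (h A (le_trans ?_ hA))
  rintro _ ⟨r, rfl⟩
  exact (integralClosure R K).algebraMap_mem r

theorem coeffs_algebraic_of_pcf_general {R K : Type*} [CommRing R] [Field K] [Algebra R K]
    {f : K[X]} (hmonic : f.Monic) (hd : 2 ≤ f.natDegree) (hfact : IsUnit (f.natDegree ! : R))
    (hcent : f.nextCoeff = 0) (hsplit : (derivative f).Splits) (hpcf : IsPostCriticallyFinite f)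
    (i : ℕ) : IsIntegral R (f.coeff i) := by
  refine isIntegral_of_forall_mem_valuationSubring fun A hA => ?_
  have hfactA : IsUnit (f.natDegree ! : A) := by
    have := hfact.map ((algebraMap R K).codRestrict A.toSubring fun r => hA ⟨r, rfl⟩)
    rwa [map_natCast] at this
  exact hpcf.coeff_mem A hmonic hd hfactA hcent hsplit i

/-- A monic centred post-critically finite polynomial of degree `d ≥ 2`
over `ℂ` has all of its coefficients algebraic over `ℚ`. -/
theorem coeffs_algebraic_of_pcf (d : ℕ) (hd : 2 ≤ d) (f : Polynomial ℂ)
    (hmonic : f.Monic) (hdeg : f.natDegree = d) (hcent : f.coeff (d - 1) = 0)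
    (hpcf : ∀ c : ℂ, (derivative f).eval c = 0 →
      (Set.range fun n : ℕ => (fun w => f.eval w)^[n] c).Finite) :
    ∀ i : ℕ, IsAlgebraic ℚ (f.coeff i) := by
  subst hdeg
  rw [← nextCoeff_of_natDegree_pos (by omega)] at hcent
  exact fun i => (coeffs_algebraic_of_pcf_general hmonic hd
    (IsUnit.natCast_factorial_of_algebra ℚ _) hcent (IsAlgClosed.splits _) hpcf i).isAlgebraic

end PCF
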